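/- Let X be a separable complex Banach space, T a bounded linear operator on X, and Λ a nonempty subset of ℂ. Assume there exist a dense subset X₀ ⊆ X and a mapping S : X₀ → X₀ such that T(S(x)) = x for all x ∈ X₀. If the set {|λ| : λ ∈ Λ} is a countable relatively compact subset of (a_T(X₀,S), b_T(X₀,S)), then ⋂_{λ∈Λ} FHC(λT) ≠ ∅. Moreover, if the set {|λ|^{1/p} : p ∈ ℕ, p ≥ 1, λ ∈ Λ} is a countable relatively compact subset of (a_T(X₀,S), b_T(X₀,S)), then ⋂_{λ∈Λ, p≥1} FHC(λT^p) ≠ ∅. -/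

import Mathlib

open Filter Topology
open scoped ENNReal NNReal

/-- Lower density of a set of natural numbers. -/
noncomputable def lowerDensity (E : Set ℕ) : ℝ :=
  Filter.liminf (fun n : ℕ =>
    (∑ k ∈ Finset.range (n + 1), Set.indicator E (fun _ => (1 : ℝ)) k) / ((n : ℝ) + 1))
    Filter.atTop

/-- The set of frequently hypercyclic vectors of an operator. -/
noncomputable def FHC {X : Type*} [NormedAddCommGroup X] [NormedSpace ℂ X]
    (T : X →L[ℂ] X) : Set X :=
  {x | ∀ U : Set X, IsOpen U → U.Nonempty → 0 < lowerDensity {n : ℕ | (T ^ n) x ∈ U}}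

/-- `a_T(X₀,S) = sup_{x ∈ X₀} limsup_n ‖Sⁿx‖^{1/n}`, computed in `ℝ≥0∞`. -/
noncomputable def aT {X : Type*} [NormedAddCommGroup X] (X₀ : Set X) (S : X₀ → X₀) : ℝ≥0∞ :=
  ⨆ x : X₀, Filter.limsup
    (fun n : ℕ => (‖((S^[n] x : X₀) : X)‖₊ : ℝ≥0∞) ^ (1 / (n : ℝ))) Filter.atTop

/-- `b_T(X₀,S) = inf_{x ∈ X₀} (limsup_n ‖Tⁿx‖^{1/n})⁻¹`, computed in `ℝ≥0∞`. -/
noncomputable def bT {X : Type*} [NormedAddCommGroup X] [NormedSpace ℂ X]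
    (T : X →L[ℂ] X) (X₀ : Set X) : ℝ≥0∞ :=
  ⨅ x : X₀, (Filter.limsup
    (fun n : ℕ => (‖(T ^ n) (x : X)‖₊ : ℝ≥0∞) ^ (1 / (n : ℝ))) Filter.atTop)⁻¹


/-- If every long initial segment contains a fixed proportion of `E`, then the lower density
is positive. -/
lemma lowerDensity_pos_of (E : Set ℕ) (κ : ℝ) (hκ : 0 < κ) (n₀ : ℕ)
    (h : ∀ n ≥ n₀, ∃ (W : ℕ) (g : ℕ → ℕ), κ * ((n : ℝ) + 1) ≤ W ∧
      (∀ s < W, g s ∈ E ∧ g s ≤ n) ∧ Set.InjOn g (Finset.range W : Set ℕ)) :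
    0 < lowerDensity E := by
  classical
  have key : ∀ n : ℕ, (∑ k ∈ Finset.range (n + 1), Set.indicator E (fun _ => (1 : ℝ)) k)
      = (((Finset.range (n + 1)).filter (· ∈ E)).card : ℝ) := by
    intro n
    rw [Finset.card_filter]
    push_cast
    refine Finset.sum_congr rfl fun k _ => ?_
    simp [Set.indicator_apply]
  refine lt_of_lt_of_le hκ ?_
  unfold lowerDensity
  refine le_liminf_of_le ?_ ?_
  · refine IsBounded.isCobounded_ge ?_
    refine isBoundedUnder_of ⟨1, fun n => ?_⟩
    rw [key]
    rw [div_le_one (by positivity)]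
    have := Finset.card_filter_le (Finset.range (n + 1)) (· ∈ E)
    rw [Finset.card_range] at this
    exact_mod_cast this
  · filter_upwards [eventually_ge_atTop n₀] with n hn
    obtain ⟨W, g, hW, hg, hinj⟩ := h n hn
    rw [key, le_div_iff₀ (by positivity)]
    refine hW.trans ?_
    have := Finset.card_le_card_of_injOn (s := Finset.range W)
      (t := (Finset.range (n + 1)).filter (· ∈ E)) g ?_ hinj
    · rw [Finset.card_range] at this
      exact_mod_cast this
    · intro s hs
      have := hg s (by simpa using hs)
      simp
      exact ⟨by omega, this.1⟩

/-- Bohr recurrence with bounded gaps. -/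
lemma bohr_syndetic (z : ℂ) (hz : ‖z‖ = 1) (ε : ℝ) (hε : 0 < ε) :
    ∃ G : ℕ, ∀ t : ℕ, ∃ s, t ≤ s ∧ s ≤ t + G ∧ ‖z ^ s - 1‖ < ε := by
  have htb : TotallyBounded (Set.range fun n : ℕ => z ^ n) := by
    refine TotallyBounded.subset ?_ (isCompact_sphere (0 : ℂ) 1).totallyBounded
    rintro _ ⟨n, rfl⟩
    simp [hz]
  obtain ⟨F, hF, hfin, hcov⟩ := Metric.finite_approx_of_totallyBounded htb ε hε
  obtain ⟨F', hF'⟩ : ∃ F' : Finset ℕ, F ⊆ (fun n : ℕ => z ^ n) '' F' := by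
    choose! g hg using (fun w (hw : w ∈ F) => (hF hw : ∃ n : ℕ, z ^ n = w))
    classical
    refine ⟨hfin.toFinset.image g, fun w hw => ⟨g w, ?_, hg w hw⟩⟩
    simp only [Finset.coe_image, Set.Finite.coe_toFinset]
    exact ⟨w, hw, rfl⟩
  refine ⟨F'.sup id, fun t => ?_⟩
  have hz0 : z ≠ 0 := by rintro rfl; simp at hz
  have := hcov ⟨t + F'.sup id, rfl⟩
  simp only [Set.mem_iUnion, Metric.mem_ball, exists_prop] at this
  obtain ⟨w, hwF, hw⟩ := this
  obtain ⟨s, hs, rfl⟩ := hF' hwF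
  have hsle : s ≤ F'.sup id := Finset.le_sup (f := id) hs
  refine ⟨t + F'.sup id - s, by omega, by omega, ?_⟩
  rw [dist_eq_norm] at hw
  have h1 : z ^ (t + F'.sup id) - z ^ s = z ^ s * (z ^ (t + F'.sup id - s) - 1) := by
    rw [mul_sub, ← pow_add, mul_one]; congr 2; omega
  simp only at hw
  rw [h1, norm_mul, norm_pow, hz, one_pow, one_mul] at hw
  exact hw

lemma growth {X : Type*} [NormedAddCommGroup X] (u : ℕ → X) (s : ℝ) (hs : 0 < s)
    (h : Filter.limsup (fun n : ℕ => (‖u n‖₊ : ℝ≥0∞) ^ (1 / (n : ℝ))) Filter.atTop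
      < ENNReal.ofReal s) : ∃ C : ℝ, 0 ≤ C ∧ ∀ n, ‖u n‖ ≤ C * s ^ n := by
  have h1 := eventually_lt_of_limsup_lt h
  obtain ⟨n₀, hn₀⟩ := eventually_atTop.1 h1
  refine ⟨1 + ∑ k ∈ Finset.range (n₀ + 1), ‖u k‖ / s ^ k, by positivity, fun n => ?_⟩
  by_cases hn : n < n₀ + 1
  · have : ‖u n‖ / s ^ n ≤ ∑ k ∈ Finset.range (n₀ + 1), ‖u k‖ / s ^ k :=
      Finset.single_le_sum (f := fun k => ‖u k‖ / s ^ k) (fun _ _ => by positivity)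
        (Finset.mem_range.2 hn)
    rw [← div_le_iff₀ (by positivity)]
    linarith
  · have h2 := (hn₀ n (by omega)).le
    have hn0 : (n : ℝ) ≠ 0 := by
      have : n ≠ 0 := by omega
      exact_mod_cast this
    have h3 := ENNReal.rpow_le_rpow h2 (Nat.cast_nonneg (α := ℝ) n)
    rw [← ENNReal.rpow_mul, one_div, inv_mul_cancel₀ hn0, ENNReal.rpow_one,
      ENNReal.rpow_natCast, ← ENNReal.ofReal_pow hs.le] at h3
    have h4 : ‖u n‖ ≤ s ^ n := by
      have := ENNReal.toReal_mono ENNReal.ofReal_ne_top h3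
      rw [ENNReal.toReal_ofReal (by positivity)] at this
      simpa using this
    have h5 : 0 ≤ ∑ k ∈ Finset.range (n₀ + 1), ‖u k‖ / s ^ k :=
      Finset.sum_nonneg fun _ _ => by positivity
    nlinarith [pow_pos hs n]

lemma syndetic_val (c : ℕ) : ∀ k : ℕ, ∃ j, k ≤ j ∧ j < k + 2 ^ (c + 2) ∧ padicValNat 2 j = c := by
  intro k
  have h1 := Nat.div_add_mod k (2 ^ (c + 1))
  have h2 := Nat.mod_lt k (show 2 ^ (c + 1) > 0 by positivity)
  set d := k / 2 ^ (c + 1)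
  refine ⟨2 ^ c * (2 * (d + 1) + 1), ?_, ?_, ?_⟩
  · rw [pow_succ] at *; nlinarith
  · have h3 : 0 < 2 ^ c := by positivity
    rw [pow_succ] at h1 h2
    have h4 := Nat.zero_le (k % (2 ^ c * 2))
    rw [pow_succ, pow_succ]; nlinarith
  · have : Fact (Nat.Prime 2) := ⟨Nat.prime_two⟩
    rw [padicValNat.mul (by positivity) (by omega), padicValNat.prime_pow,
      padicValNat.eq_zero_of_not_dvd (by omega), add_zero]

lemma geom_dist (σ : ℝ) (h0 : 0 < σ) (h1 : σ < 1) (m : ℕ) :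
    Summable (fun n : ℕ => σ ^ ((n - m) + (m - n))) ∧
      ∑' n : ℕ, σ ^ ((n - m) + (m - n)) ≤ 2 / (1 - σ) := by
  have hg := summable_geometric_of_lt_one h0.le h1
  have hsh : (fun n : ℕ => σ ^ (((n + m) - m) + (m - (n + m)))) = fun n => σ ^ n := by
    funext n; congr 1; omega
  have hs : Summable (fun n : ℕ => σ ^ ((n - m) + (m - n))) := by
    rw [← summable_nat_add_iff m, hsh]; exact hg
  refine ⟨hs, ?_⟩
  rw [← hs.sum_add_tsum_nat_add m, hsh, tsum_geometric_of_lt_one h0.le h1]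
  have h2 : ∑ n ∈ Finset.range m, σ ^ ((n - m) + (m - n)) ≤ (1 - σ)⁻¹ := by
    rw [← tsum_geometric_of_lt_one h0.le h1]
    calc _ = ∑ n ∈ Finset.range m, σ ^ (n + 1) := by
          rw [← Finset.sum_range_reflect]
          refine Finset.sum_congr rfl fun n hn => ?_
          have := Finset.mem_range.1 hn
          congr 1; omega
      _ ≤ ∑ n ∈ Finset.range m, σ ^ n :=
          Finset.sum_le_sum fun n _ => pow_le_pow_of_le_one h0.le h1.le (by omega)
      _ ≤ _ := hg.sum_le_tsum _ fun _ _ => by positivity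
  rw [div_eq_mul_inv]; linarith

lemma cross_arith (σ D : ℝ) (h0 : 0 < σ) (h1 : σ < 1) (hD : 0 ≤ D) (K : ℕ)
    (hK : D * (σ ^ 4) ^ K ≤ 1) (a d : ℕ) (h : 2 * (K + 1) * a ≤ a + d) :
    D ^ a * (σ ^ 4) ^ d ≤ σ ^ (a + d) * σ ^ a := by
  have hd : K * a ≤ d := by nlinarith
  obtain ⟨e, rfl⟩ := Nat.exists_eq_add_of_le hd
  calc D ^ a * (σ ^ 4) ^ (K * a + e) = (D * (σ ^ 4) ^ K) ^ a * (σ ^ 4) ^ e := by ring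
    _ ≤ 1 * (σ ^ 4) ^ e := by
        gcongr
        exact pow_le_one₀ (by positivity) hK
    _ = σ ^ (4 * e) := by rw [one_mul, pow_mul]
    _ ≤ σ ^ ((a + (K * a + e)) + a) := pow_le_pow_of_le_one h0.le h1.le (by nlinarith)
    _ = _ := by rw [pow_add]

section core
variable {X : Type*} [NormedAddCommGroup X] [NormedSpace ℂ X]

lemma T_S_add (T : X →L[ℂ] X) (X₀ : Set X) (S : X₀ → X₀)
    (hTS : ∀ x : X₀, T ((S x : X₀) : X) = (x : X)) (y : X₀) (m d : ℕ) :
    (T ^ m) ((S^[m + d] y : X₀) : X) = ((S^[d] y : X₀) : X) := by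
  induction m with
  | zero => simp
  | succ m ih =>
    rw [pow_succ, show m + 1 + d = (m + d) + 1 by ring, Function.iterate_succ_apply',
      mul_apply_eq_comp, hTS, ih]

lemma T_add_S (T : X →L[ℂ] X) (X₀ : Set X) (S : X₀ → X₀)
    (hTS : ∀ x : X₀, T ((S x : X₀) : X) = (x : X)) (y : X₀) (n d : ℕ) :
    (T ^ (n + d)) ((S^[n] y : X₀) : X) = (T ^ d) (y : X) := by
  have := T_S_add T X₀ S hTS y n 0
  rw [add_comm n d, pow_add, mul_apply_eq_comp]
  rw [add_zero] at this
  rw [this]; rfl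

/-- forward estimate -/
lemma est_fwd (T : X →L[ℂ] X) (X₀ : Set X) (S : X₀ → X₀)
    (hTS : ∀ x : X₀, T ((S x : X₀) : X) = (x : X)) (y : X₀)
    (q ρ₁ C r r' : ℝ) (hq : 0 < q) (hρ₁ : 0 < ρ₁) (hr : 0 < r) (hr' : ρ₁ ≤ r') (hC : 0 ≤ C)
    (hS : ∀ n, ‖((S^[n] y : X₀) : X)‖ ≤ C * (q * ρ₁) ^ n) (m d : ℕ) :
    ‖((r : ℂ) ^ m) • (T ^ m) ((((r' : ℂ) ^ (m + d))⁻¹) • ((S^[m + d] y : X₀) : X))‖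
      ≤ C * ((r / r') ^ m * q ^ d) := by
  have hr'0 : 0 < r' := hρ₁.trans_le hr'
  rw [map_smul, T_S_add T X₀ S hTS, norm_smul, norm_smul, norm_inv, norm_pow, norm_pow,
    Complex.norm_real, Complex.norm_real, Real.norm_of_nonneg hr.le, Real.norm_of_nonneg hr'0.le]
  calc r ^ m * ((r' ^ (m + d))⁻¹ * ‖((S^[d] y : X₀) : X)‖)
      ≤ r ^ m * ((r' ^ (m + d))⁻¹ * (C * (q * ρ₁) ^ d)) := by gcongr; exact hS d
    _ ≤ r ^ m * ((r' ^ (m + d))⁻¹ * (C * (q * r') ^ d)) := by gcongr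
    _ = _ := by rw [mul_pow, div_pow, pow_add]; field_simp

lemma est_bwd (T : X →L[ℂ] X) (X₀ : Set X) (S : X₀ → X₀)
    (hTS : ∀ x : X₀, T ((S x : X₀) : X) = (x : X)) (y : X₀)
    (q ρ₂ C r r' : ℝ) (hq : 0 < q) (hr : 0 < r) (hr2 : r ≤ ρ₂) (hr' : 0 < r') (hC : 0 ≤ C)
    (hT : ∀ n, ‖(T ^ n) (y : X)‖ ≤ C * (q / ρ₂) ^ n) (n d : ℕ) :
    ‖((r : ℂ) ^ (n + d)) • (T ^ (n + d)) ((((r' : ℂ) ^ n)⁻¹) • ((S^[n] y : X₀) : X))‖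
      ≤ C * ((r / r') ^ n * q ^ d) := by
  rw [map_smul, T_add_S T X₀ S hTS, norm_smul, norm_smul, norm_inv, norm_pow, norm_pow,
    Complex.norm_real, Complex.norm_real, Real.norm_of_nonneg hr.le, Real.norm_of_nonneg hr'.le]
  calc r ^ (n + d) * ((r' ^ n)⁻¹ * ‖(T ^ d) (y : X)‖)
      ≤ r ^ (n + d) * ((r' ^ n)⁻¹ * (C * (q / ρ₂) ^ d)) := by gcongr; exact hT d
    _ ≤ r ^ (n + d) * ((r' ^ n)⁻¹ * (C * (q / r) ^ d)) := by
        have : 0 ≤ q / ρ₂ := div_nonneg hq.le (hr.le.trans hr2)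
        gcongr
    _ = _ := by rw [div_pow, div_pow, pow_add]; field_simp

/-- The class of the integer `m`. -/
noncomputable def cls (Q m : ℕ) : ℕ := padicValNat 2 (Nat.log Q m)

/-- Active integers. -/
def act (Q : ℕ) (N : ℕ → ℕ) (C : ℕ → ℝ) (m : ℕ) : Prop :=
  m ≠ 0 ∧ m < 2 * Q ^ (Nat.log Q m) ∧ N (cls Q m) ∣ m ∧ C (cls Q m) ≤ m

lemma slot_sep (K Q : ℕ) (hQ : Q = 4 * (K + 1)) (m n : ℕ) (hn0 : n ≠ 0)
    (hm : m < 2 * Q ^ (Nat.log Q m)) (h : Nat.log Q m < Nat.log Q n) :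
    2 * (K + 1) * m ≤ n := by
  have h1 : Q ^ (Nat.log Q n) ≤ n := Nat.pow_log_le_self Q hn0
  have h2 : Q ^ (Nat.log Q m + 1) ≤ Q ^ (Nat.log Q n) :=
    Nat.pow_le_pow_right (by omega) h
  rw [pow_succ] at h2
  have h3 : 2 * (K + 1) * m ≤ 2 * (K + 1) * (2 * Q ^ Nat.log Q m) :=
    Nat.mul_le_mul_left _ hm.le
  have h4 : 2 * (K + 1) * (2 * Q ^ Nat.log Q m) = Q ^ Nat.log Q m * Q := by
    conv_rhs => rw [hQ]
    conv_lhs => rw [hQ]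
    ring
  omega

lemma pair_bound (T : X →L[ℂ] X) (X₀ : Set X) (S : X₀ → X₀)
    (hTS : ∀ x : X₀, T ((S x : X₀) : X) = (x : X))
    (σ ρ₁ ρ₂ : ℝ) (h0 : 0 < σ) (h1 : σ < 1) (hρ₁ : 0 < ρ₁)
    (r : ℕ → ℝ) (y : ℕ → X₀) (N : ℕ → ℕ) (C : ℕ → ℝ)
    (hr1 : ∀ c, ρ₁ ≤ r c) (hr2 : ∀ c, r c ≤ ρ₂) (hC : ∀ c, 0 ≤ C c)
    (hS : ∀ c n, ‖((S^[n] (y c) : X₀) : X)‖ ≤ C c * (σ ^ 4 * ρ₁) ^ n)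
    (hT : ∀ c n, ‖(T ^ n) (y c : X)‖ ≤ C c * (σ ^ 4 / ρ₂) ^ n)
    (K Q : ℕ) (hK : ρ₂ / ρ₁ * (σ ^ 4) ^ K ≤ 1) (hQ : Q = 4 * (K + 1))
    (m n : ℕ) (hm : act Q N C m) (hn : act Q N C n) (hmn : n ≠ m) :
    ‖((r (cls Q m) : ℂ) ^ m) • (T ^ m)
        ((((r (cls Q n) : ℂ) ^ n)⁻¹) • ((S^[n] (y (cls Q n)) : X₀) : X))‖
      ≤ C (cls Q m) * σ ^ (N (cls Q m)) * σ ^ ((n - m) + (m - n)) + n * σ ^ n * σ ^ m := by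
  have hrp : ∀ c, 0 < r c := fun c => hρ₁.trans_le (hr1 c)
  have hrat : ∀ c c', r c / r c' ≤ ρ₂ / ρ₁ := fun c c' =>
    div_le_div₀ ((hrp c).le.trans (hr2 c)) (hr2 c) hρ₁ (hr1 c')
  have hD : 0 ≤ ρ₂ / ρ₁ := div_nonneg ((hrp 0).le.trans (hr2 0)) hρ₁.le
  have hsame : ∀ d N' : ℕ, d ≠ 0 → N' ∣ d → (σ ^ 4) ^ d ≤ σ ^ N' * σ ^ d := by
    intro d N' hd hdvd
    rw [← pow_mul, ← pow_add]
    have := Nat.le_of_dvd (by omega) hdvd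
    exact pow_le_pow_of_le_one h0.le h1.le (by omega)
  have hnn : 0 ≤ (n : ℝ) * σ ^ n * σ ^ m := by positivity
  have hpp : 0 ≤ C (cls Q m) * σ ^ (N (cls Q m)) * σ ^ ((n - m) + (m - n)) := by
    have := hC (cls Q m); positivity
  obtain ⟨hm0, hm1, hm2, hm3⟩ := hm
  obtain ⟨hn0, hn1, hn2, hn3⟩ := hn
  rcases lt_or_gt_of_ne hmn with hlt | hlt
  · obtain ⟨d, rfl⟩ := Nat.exists_eq_add_of_lt hlt
    rw [add_assoc] at *
    generalize hde : d + 1 = e at *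
    have hest := est_bwd T X₀ S hTS (y (cls Q n)) (σ ^ 4) ρ₂ (C (cls Q n)) (r (cls Q (n + e)))
      (r (cls Q n)) (by positivity) (hrp _) (hr2 _) (hrp _) (hC _) (hT _) n e
    refine hest.trans ?_
    by_cases hlog : Nat.log Q n = Nat.log Q (n + e)
    · have hc : cls Q n = cls Q (n + e) := by unfold cls; rw [hlog]
      rw [hc] at hn2 ⊢
      have hd : N (cls Q (n + e)) ∣ e := (Nat.dvd_add_right hn2).1 hm2
      have h2 := hsame e _ (by omega) hd
      rw [div_self (hrp _).ne', one_pow, one_mul, show n - (n + e) + (n + e - n) = e by omega]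
      have := mul_le_mul_of_nonneg_left h2 (hC (cls Q (n + e)))
      linarith
    · have hl : Nat.log Q n < Nat.log Q (n + e) :=
        lt_of_le_of_ne (Nat.log_mono_right (by omega)) hlog
      have hsep := slot_sep K Q hQ n (n + e) hm0 hn1 hl
      have h2 := cross_arith σ _ h0 h1 hD K hK n e hsep
      have h3 : C (cls Q n) * ((r (cls Q (n + e)) / r (cls Q n)) ^ n * (σ ^ 4) ^ e)
          ≤ n * (σ ^ (n + e) * σ ^ n) := by
        refine mul_le_mul hn3 (le_trans ?_ h2) ?_ (by positivity)
        · exact mul_le_mul_of_nonneg_right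
            (pow_le_pow_left₀ (div_pos (hrp _) (hrp _)).le (hrat _ _) _) (by positivity)
        · have := hrp (cls Q (n + e)); have := hrp (cls Q n); positivity
      linarith
  · obtain ⟨d, rfl⟩ := Nat.exists_eq_add_of_lt hlt
    rw [add_assoc] at *
    generalize hde : d + 1 = e at *
    have hest := est_fwd T X₀ S hTS (y (cls Q (m + e))) (σ ^ 4) ρ₁ (C (cls Q (m + e)))
      (r (cls Q m)) (r (cls Q (m + e))) (by positivity) hρ₁ (hrp _) (hr1 _) (hC _) (hS _) m e
    refine hest.trans ?_
    by_cases hlog : Nat.log Q m = Nat.log Q (m + e)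
    · have hc : cls Q (m + e) = cls Q m := by unfold cls; rw [hlog]
      rw [hc] at hn2 ⊢
      have hd : N (cls Q m) ∣ e := (Nat.dvd_add_right hm2).1 hn2
      have h2 := hsame e _ (by omega) hd
      rw [div_self (hrp _).ne', one_pow, one_mul, show m + e - m + (m - (m + e)) = e by omega]
      have := mul_le_mul_of_nonneg_left h2 (hC (cls Q m))
      linarith
    · have hl : Nat.log Q m < Nat.log Q (m + e) :=
        lt_of_le_of_ne (Nat.log_mono_right (by omega)) hlog
      have hsep := slot_sep K Q hQ m (m + e) hn0 hm1 hl
      have h2 := cross_arith σ _ h0 h1 hD K hK m e hsep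
      have h3 : C (cls Q (m + e)) * ((r (cls Q m) / r (cls Q (m + e))) ^ m * (σ ^ 4) ^ e)
          ≤ ((m + e : ℕ) : ℝ) * (σ ^ (m + e) * σ ^ m) := by
        refine mul_le_mul hn3 (le_trans ?_ h2) ?_ (by positivity)
        · exact mul_le_mul_of_nonneg_right
            (pow_le_pow_left₀ (div_pos (hrp _) (hrp _)).le (hrat _ _) _) (by positivity)
        · have := hrp (cls Q (m + e)); have := hrp (cls Q m); positivity
      linarith

lemma core [CompleteSpace X] (T : X →L[ℂ] X) (X₀ : Set X) (S : X₀ → X₀)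
    (hTS : ∀ x : X₀, T ((S x : X₀) : X) = (x : X))
    (σ ρ₁ ρ₂ : ℝ) (h0 : 0 < σ) (h1 : σ < 1) (hρ₁ : 0 < ρ₁)
    (r : ℕ → ℝ) (y : ℕ → X₀) (N : ℕ → ℕ) (C : ℕ → ℝ)
    (hr1 : ∀ c, ρ₁ ≤ r c) (hr2 : ∀ c, r c ≤ ρ₂) (hC : ∀ c, 0 ≤ C c)
    (hS : ∀ c n, ‖((S^[n] (y c) : X₀) : X)‖ ≤ C c * (σ ^ 4 * ρ₁) ^ n)
    (hT : ∀ c n, ‖(T ^ n) (y c : X)‖ ≤ C c * (σ ^ 4 / ρ₂) ^ n) :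
    ∃ (x : X) (Q : ℕ) (M : ℝ), 2 ≤ Q ∧ ∀ m, act Q N C m →
      ‖((r (cls Q m) : ℂ) ^ m) • (T ^ m) x - y (cls Q m)‖
        ≤ C (cls Q m) * σ ^ (N (cls Q m)) * (2 / (1 - σ)) + M * σ ^ m := by
  classical
  have hrp : ∀ c, 0 < r c := fun c => hρ₁.trans_le (hr1 c)
  have hσ4 : σ ^ 4 < 1 := pow_lt_one₀ h0.le h1 (by norm_num)
  obtain ⟨K, hK⟩ : ∃ K : ℕ, ρ₂ / ρ₁ * (σ ^ 4) ^ K ≤ 1 := by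
    have ht : Tendsto (fun K : ℕ => ρ₂ / ρ₁ * (σ ^ 4) ^ K) atTop (𝓝 (ρ₂ / ρ₁ * 0)) :=
      (tendsto_pow_atTop_nhds_zero_of_lt_one (by positivity) hσ4).const_mul _
    rw [mul_zero] at ht
    exact (ht.eventually (ge_mem_nhds zero_lt_one)).exists
  set Q := 4 * (K + 1) with hQ
  have hsum : Summable (fun n : ℕ => (n : ℝ) * σ ^ n) := by
    have := summable_pow_mul_geometric_of_norm_lt_one 1 (r := σ)
      (by rwa [Real.norm_of_nonneg h0.le])
    simpa using this
  set v : ℕ → X := fun n => if act Q N C n then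
    (((r (cls Q n) : ℂ) ^ n)⁻¹) • ((S^[n] (y (cls Q n)) : X₀) : X) else 0 with hv
  have hvs : Summable v := by
    refine Summable.of_norm_bounded hsum fun n => ?_
    simp only [hv]
    split_ifs with hn
    · have := est_fwd T X₀ S hTS (y (cls Q n)) (σ ^ 4) ρ₁ (C (cls Q n)) 1 (r (cls Q n))
        (by positivity) hρ₁ one_pos (hr1 _) (hC _) (hS _) 0 n
      simp only [pow_zero, one_smul, zero_add, one_mul] at this
      refine this.trans ?_
      refine mul_le_mul hn.2.2.2 ?_ (by positivity) (by positivity)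
      rw [← pow_mul]
      exact pow_le_pow_of_le_one h0.le h1.le (by omega)
    · rw [norm_zero]; positivity
  refine ⟨∑' n, v n, Q, ∑' n : ℕ, (n : ℝ) * σ ^ n, by omega, fun m hm => ?_⟩
  set c := cls Q m with hc
  set L : X →L[ℂ] X := ((r c : ℂ) ^ m) • (T ^ m) with hL
  have hLv : Summable fun n => L (v n) := L.summable hvs
  have hLx : ((r c : ℂ) ^ m) • (T ^ m) (∑' n, v n) = ∑' n, L (v n) := by
    rw [← L.map_tsum hvs]; rfl
  have hLm : L (v m) = y c := by
    have h2 := T_S_add T X₀ S hTS (y c) m 0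
    rw [add_zero] at h2
    have h3 : (r c : ℂ) ^ m ≠ 0 := pow_ne_zero _ (by exact_mod_cast (hrp c).ne')
    simp only [hv, if_pos hm, hL, smul_apply, map_smul, ← hc, h2]
    rw [smul_smul, inv_mul_cancel₀ h3, one_smul]; rfl
  rw [hLx, hLv.tsum_eq_add_tsum_ite m, hLm, add_sub_cancel_left]
  obtain ⟨hg1, hg2⟩ := geom_dist σ h0 h1 m
  have hb : HasSum (fun n : ℕ => C c * σ ^ (N c) * σ ^ ((n - m) + (m - n)) + n * σ ^ n * σ ^ m)
      (C c * σ ^ (N c) * (∑' n : ℕ, σ ^ ((n - m) + (m - n))) +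
        (∑' n : ℕ, (n : ℝ) * σ ^ n) * σ ^ m) :=
    (hg1.hasSum.mul_left _).add (hsum.hasSum.mul_right _)
  have hnn := hC c
  refine (tsum_of_norm_bounded hb fun n => ?_).trans ?_
  · split_ifs with hnm
    · rw [norm_zero]; positivity
    · simp only [hv]
      split_ifs with hn
      · exact pair_bound T X₀ S hTS σ ρ₁ ρ₂ h0 h1 hρ₁ r y N C hr1 hr2 hC hS hT K Q hK hQ m n
          hm hn hnm
      · rw [map_zero, norm_zero]; positivity
  · gcongr

end core

set_option maxHeartbeats 1000000 in
lemma density_slots (Q c N M G t₁ : ℕ) (hQ : 2 ≤ Q) (hM : 1 ≤ M) (hMN : M ≤ N)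
    (good : ℕ → Prop) (hgood : ∀ t, ∃ s, t ≤ s ∧ s ≤ t + G ∧ good s) (E : Set ℕ)
    (hE : ∀ t, t₁ ≤ t → good t → cls Q (N * t) = c →
      N * t < 2 * Q ^ (Nat.log Q (N * t)) → M * t ∈ E) : 0 < lowerDensity E := by
  have hN0 : 0 < N := by omega
  set P := 2 ^ (c + 2) with hP
  set A := 4 * N * (G + 1) * Q ^ (P + 1) with hA
  have hApos : 0 < A := by positivity
  set J := 4 * N * (G + 1) * (t₁ + 1) with hJ
  refine lowerDensity_pos_of E (1 / (A : ℝ)) (by positivity) (Q ^ (P + J)) fun n hn => ?_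
  have hn0 : n ≠ 0 := by
    have : 0 < Q ^ (P + J) := by positivity
    omega
  set i := Nat.log Q n with hi
  have hiPJ : P + J ≤ i := Nat.le_log_of_pow_le (by omega) hn
  obtain ⟨j, hj1, hj2, hj3⟩ := syndetic_val c (i - P)
  have hjJ : J ≤ j := by omega
  have hji : j + 1 ≤ i := by omega
  have hB0 : j < Q ^ j := Nat.lt_pow_self (by omega)
  have hBi : 2 * Q ^ j ≤ Q ^ (j + 1) := by rw [pow_succ, mul_comm]; gcongr
  have hBn : Q ^ (j + 1) ≤ n :=
    (Nat.pow_le_pow_right (by omega) hji).trans (Nat.pow_log_le_self Q hn0)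
  have hnB : n < Q ^ j * Q ^ (P + 1) := by
    rw [← pow_add]
    exact (Nat.lt_pow_succ_log_self (by omega) n).trans_le
      (Nat.pow_le_pow_right (by omega) (by omega))
  set B := Q ^ j with hB
  have hJB : J < B := by omega
  have hJ1 : 4 * N * (G + 1) ≤ J := by rw [hJ]; exact Nat.le_mul_of_pos_right _ (by omega)
  have hJ2 : N * t₁ ≤ J := by
    rw [hJ]
    calc N * t₁ ≤ (4 * N * (G + 1)) * t₁ := by
          gcongr
          nlinarith
      _ ≤ _ := by gcongr; omega
  have hJ3 : 4 * N ≤ J := le_trans (Nat.le_mul_of_pos_right _ (by omega)) hJ1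
  set t₀ := B / N + 1 with ht₀
  set W := B / (2 * N * (G + 1)) with hW
  have ht1 : B < N * t₀ := Nat.lt_mul_div_succ B (by omega)
  have ht2 : N * t₀ ≤ B + N := by
    rw [ht₀, mul_add, mul_one]
    have := Nat.mul_div_le B N
    omega
  have hW1 : 2 * N * (G + 1) * W ≤ B := Nat.mul_div_le B _
  have hW2 : B < 2 * N * (G + 1) * (W + 1) := Nat.lt_mul_div_succ B (by positivity)
  have hW3 : 1 ≤ W := by
    by_contra hcon
    have : W = 0 := Nat.lt_one_iff.1 (not_le.1 hcon)
    rw [this] at hW2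
    nlinarith
  clear_value W t₀ B J A i P
  choose τ hτ1 hτ2 hτ3 using fun s : ℕ => hgood (t₀ + s * (G + 1))
  refine ⟨W, fun s => M * τ s, ?_, ?_, ?_⟩
  · have h1 : n + 1 ≤ A * W := by
      calc n + 1 ≤ B * Q ^ (P + 1) := hnB
        _ ≤ (4 * N * (G + 1) * W) * Q ^ (P + 1) := by
            gcongr
            have := Nat.mul_le_mul_left (2 * N * (G + 1)) hW3
            linarith
        _ = A * W := by rw [hA]; ring
    rw [one_div, inv_mul_le_iff₀ (by positivity)]
    exact_mod_cast h1
  · intro s hs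
    have hup : τ s + 1 ≤ t₀ + W * (G + 1) := by
      have : (s + 1) * (G + 1) ≤ W * (G + 1) := Nat.mul_le_mul_right _ hs
      have h5 := hτ2 s
      have e4 : (s + 1) * (G + 1) = s * (G + 1) + (G + 1) := by ring
      omega
    have hlo : N * t₀ ≤ N * τ s := Nat.mul_le_mul_left _ (by have := hτ1 s; omega)
    have hup2 : N * τ s < 2 * B := by
      have : N * (τ s + 1) ≤ N * (t₀ + W * (G + 1)) := Nat.mul_le_mul_left _ hup
      have e1 : N * (t₀ + W * (G + 1)) = N * t₀ + N * (G + 1) * W := by ring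
      have e2 : 2 * N * (G + 1) * W = 2 * (N * (G + 1) * W) := by ring
      have e3 : N * (τ s + 1) = N * τ s + N := by ring
      linarith
    have hlog : Nat.log Q (N * τ s) = j :=
      Nat.log_eq_of_pow_le_of_lt_pow (by rw [← hB]; omega) (by omega)
    refine ⟨hE (τ s) ?_ (hτ3 s) ?_ ?_, ?_⟩
    · by_contra hcon
      have : N * τ s ≤ N * t₁ := Nat.mul_le_mul_left _ (by omega)
      omega
    · unfold cls; rw [hlog, hj3]
    · rw [hlog, ← hB]; exact hup2
    · have : M * τ s ≤ N * τ s := Nat.mul_le_mul_right _ hMN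
      show M * τ s ≤ n
      omega
  · refine Function.Injective.injOn (StrictMono.injective ?_)
    refine strictMono_nat_of_lt_succ fun s => ?_
    have h1 := hτ2 s
    have h2 := hτ1 (s + 1)
    have e4 : (s + 1) * (G + 1) = s * (G + 1) + (G + 1) := by ring
    have : τ s < τ (s + 1) := by omega
    exact Nat.mul_lt_mul_of_pos_left this hM

lemma main_fhc {X : Type*} [NormedAddCommGroup X] [NormedSpace ℂ X]
    [CompleteSpace X] [TopologicalSpace.SeparableSpace X]
    (T : X →L[ℂ] X) (X₀ : Set X) (hX₀ : Dense X₀) (S : X₀ → X₀)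
    (hTS : ∀ x : X₀, T ((S x : X₀) : X) = (x : X))
    (R : Set ℝ) (hRc : R.Countable) (hRne : R.Nonempty)
    (σ ρ₁ ρ₂ : ℝ) (h0 : 0 < σ) (h1 : σ < 1) (hρ₁ : 0 < ρ₁)
    (hR : ∀ r ∈ R, ρ₁ ≤ r ∧ r ≤ ρ₂)
    (hgr : ∀ y : X₀, ∃ C : ℝ, 0 ≤ C ∧ (∀ n, ‖((S^[n] y : X₀) : X)‖ ≤ C * (σ ^ 4 * ρ₁) ^ n) ∧
      (∀ n, ‖(T ^ n) (y : X)‖ ≤ C * (σ ^ 4 / ρ₂) ^ n)) :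
    ∃ x : X, ∀ r ∈ R, ∀ p : ℕ, 1 ≤ p → ∀ l : ℂ, ‖l‖ = r ^ p → x ∈ FHC (l • (T ^ p)) := by
  have : SecondCountableTopology X := UniformSpace.secondCountable_of_separable X
  obtain ⟨D, hDX, hDc, hDd⟩ := hX₀.exists_countable_dense_subset
  have hDne : D.Nonempty := hDd.nonempty
  have := hRc.to_subtype
  have := hDc.to_subtype
  have := hRne.to_subtype
  have := hDne.to_subtype
  obtain ⟨φ, hφ⟩ := exists_surjective_nat (R × ℕ × D × ℕ)
  choose C hC0 hCS hCT using hgr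
  let yy : ℕ → X₀ := fun c => ⟨(φ c).2.2.1, hDX (φ c).2.2.1.2⟩
  have hN : ∀ c : ℕ, ∃ k : ℕ, 1 ≤ k ∧
      C (yy c) * σ ^ (((φ c).2.1 + 1) * k) * (2 / (1 - σ)) < 1 / (((φ c).2.2.2 : ℝ) + 1) := by
    intro c
    have ht : Tendsto (fun k : ℕ => C (yy c) * σ ^ (((φ c).2.1 + 1) * k) * (2 / (1 - σ))) atTop
        (𝓝 (C (yy c) * 0 * (2 / (1 - σ)))) := by
      refine Tendsto.mul_const _ (Tendsto.const_mul _ ?_)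
      refine (tendsto_pow_atTop_nhds_zero_of_lt_one h0.le h1).comp ?_
      exact tendsto_id.const_mul_atTop' (by omega)
    rw [mul_zero, zero_mul] at ht
    have h2 := ht.eventually (gt_mem_nhds (show (0 : ℝ) < 1 / (((φ c).2.2.2 : ℝ) + 1) by positivity))
    obtain ⟨k, hk1, hk2⟩ := (h2.and (eventually_ge_atTop 1)).exists
    exact ⟨k, hk2, hk1⟩
  choose k hk1 hk2 using hN
  obtain ⟨x, Q, M, hQ, hx⟩ := core T X₀ S hTS σ ρ₁ ρ₂ h0 h1 hρ₁ (fun c => ((φ c).1 : ℝ)) yy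
    (fun c => ((φ c).2.1 + 1) * k c) (fun c => C (yy c)) (fun c => (hR _ (φ c).1.2).1)
    (fun c => (hR _ (φ c).1.2).2) (fun c => hC0 _) (fun c => hCS _) (fun c => hCT _)
  refine ⟨x, fun r hr p hp l hl U hU hUne => ?_⟩
  obtain ⟨y, hyU, hyD⟩ := hDd.inter_open_nonempty U hU hUne
  obtain ⟨ε, hε, hεU⟩ := Metric.isOpen_iff.1 hU y hyU
  obtain ⟨e, he⟩ := exists_nat_one_div_lt (show 0 < ε / 3 by positivity)
  obtain ⟨c, hc⟩ := hφ (⟨r, hr⟩, p - 1, ⟨y, hyD⟩, e)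
  have hp1 : p - 1 + 1 = p := by omega
  have hrp : 0 < r := hρ₁.trans_le (hR r hr).1
  have hk1c := hk1 c
  have hk2c := hk2 c
  have hyc : ((yy c : X₀) : X) = y := by simp only [yy, hc]
  simp only [hc, hp1] at hk2c
  set z : ℂ := (l / (r : ℂ) ^ p) ^ (k c) with hz
  have hz1 : ‖z‖ = 1 := by
    rw [hz, norm_pow, norm_div, norm_pow, Complex.norm_real, Real.norm_of_nonneg hrp.le, hl,
      div_self (by positivity), one_pow]
  obtain ⟨G, hG⟩ := bohr_syndetic z hz1 (ε / (3 * (‖y‖ + 1))) (by positivity)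
  have htend : Tendsto (fun m : ℕ => M * σ ^ m) atTop (𝓝 (M * 0)) :=
    (tendsto_pow_atTop_nhds_zero_of_lt_one h0.le h1).const_mul _
  rw [mul_zero] at htend
  obtain ⟨t₁, ht₁⟩ := eventually_atTop.1
    ((htend.eventually (gt_mem_nhds (show 0 < ε / 3 by positivity))).and
      (tendsto_natCast_atTop_atTop.eventually_ge_atTop (C (yy c))))
  refine density_slots Q c (p * k c) (k c) G (t₁ + 1) hQ hk1c
    (Nat.le_mul_of_pos_left _ hp) _ hG _ fun t ht hgood hcls hslot => ?_
  set m := p * k c * t with hm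
  have htm : t ≤ m := Nat.le_mul_of_pos_left _ (by positivity)
  obtain ⟨hm1, hm2⟩ := ht₁ m (by omega)
  have hact : act Q (fun c => ((φ c).2.1 + 1) * k c) (fun c => C (yy c)) m := by
    refine ⟨by omega, hslot, ?_, ?_⟩
    · simp only [hcls, hc, hp1]; exact Dvd.intro _ rfl
    · simp only [hcls]; exact hm2
  have hxm := hx m hact
  simp only [hcls, hc, hp1, hyc] at hxm
  apply hεU
  rw [Metric.mem_ball, dist_eq_norm]
  have hrC : (r : ℂ) ≠ 0 := by exact_mod_cast hrp.ne'
  have hform : ((l • T ^ p) ^ (k c * t)) x = z ^ t • ((r : ℂ) ^ m • (T ^ m) x) := by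
    rw [smul_pow, ← pow_mul, smul_apply, smul_smul, ← mul_assoc, ← hm]
    congr 1
    rw [hz, ← pow_mul, div_pow, hm, ← pow_mul, mul_assoc p]
    field_simp
  rw [hform]
  have hsplit : z ^ t • ((r : ℂ) ^ m • (T ^ m) x) - y
      = z ^ t • ((r : ℂ) ^ m • (T ^ m) x - y) + (z ^ t - 1) • y := by
    rw [smul_sub, sub_smul, one_smul]; abel
  rw [hsplit]
  have hA : ‖z ^ t • ((r : ℂ) ^ m • (T ^ m) x - y)‖ < ε / 3 + ε / 3 := by
    rw [norm_smul, norm_pow, hz1, one_pow, one_mul]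
    linarith
  have hB : ‖(z ^ t - 1) • y‖ ≤ ε / 3 := by
    rw [norm_smul]
    calc ‖z ^ t - 1‖ * ‖y‖ ≤ (ε / (3 * (‖y‖ + 1))) * (‖y‖ + 1) := by
          gcongr
          linarith
      _ = ε / 3 := by field_simp
  calc _ ≤ _ := norm_add_le _ _
    _ < ε := by linarith

lemma exists_consts {X : Type*} [NormedAddCommGroup X] [NormedSpace ℂ X]
    (T : X →L[ℂ] X) (X₀ : Set X) (S : X₀ → X₀) (ρ₁ ρ₂ : ℝ) (hρ : ρ₁ ≤ ρ₂)
    (ha : aT X₀ S < ENNReal.ofReal ρ₁) (hb : ENNReal.ofReal ρ₂ < bT T X₀) :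
    0 < ρ₁ ∧ ∃ σ : ℝ, 0 < σ ∧ σ < 1 ∧
    (∀ y : X₀, ∃ C : ℝ, 0 ≤ C ∧ (∀ n, ‖((S^[n] y : X₀) : X)‖ ≤ C * (σ ^ 4 * ρ₁) ^ n) ∧
      (∀ n, ‖(T ^ n) (y : X)‖ ≤ C * (σ ^ 4 / ρ₂) ^ n)) := by
  have hρ₁ : 0 < ρ₁ := ENNReal.ofReal_pos.1 (bot_le.trans_lt ha)
  have hρ₂ : 0 < ρ₂ := hρ₁.trans_le hρ
  refine ⟨hρ₁, ?_⟩
  obtain ⟨s, hs0, hs1, hs2⟩ := ENNReal.lt_iff_exists_real_btwn.1 ha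
  obtain ⟨t, ht0, ht1, ht2⟩ := ENNReal.lt_iff_exists_real_btwn.1 hb
  have hs : 0 < s := ENNReal.ofReal_pos.1 (bot_le.trans_lt hs1)
  have hsρ : s < ρ₁ := (ENNReal.ofReal_lt_ofReal_iff hρ₁).1 hs2
  have htρ : ρ₂ < t := by
    rcases lt_or_ge ρ₂ t with h | h
    · exact h
    · exact absurd ht1 (not_lt.2 (ENNReal.ofReal_le_ofReal h))
  have ht : 0 < t := hρ₂.trans htρ
  set q := max (s / ρ₁) (ρ₂ / t) with hq
  have hq0 : 0 < q := lt_max_of_lt_left (by positivity)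
  have hq1 : q < 1 := max_lt ((div_lt_one hρ₁).2 hsρ) ((div_lt_one ht).2 htρ)
  have hsq : s ≤ q * ρ₁ := (div_le_iff₀ hρ₁).1 (le_max_left _ _)
  have htq : t⁻¹ ≤ q / ρ₂ := by
    rw [le_div_iff₀ hρ₂, mul_comm, ← div_eq_mul_inv]; exact le_max_right _ _
  refine ⟨√(√q), by positivity, ?_, fun y => ?_⟩
  · rw [Real.sqrt_lt' one_pos, one_pow, Real.sqrt_lt' one_pos, one_pow]; exact hq1
  have h4 : √(√q) ^ 4 = q := by
    rw [show 4 = 2 * 2 by norm_num, pow_mul, Real.sq_sqrt (by positivity), Real.sq_sqrt hq0.le]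
  rw [h4]
  obtain ⟨C₁, hC₁, hC₁'⟩ := growth (fun n => ((S^[n] y : X₀) : X)) s hs
    ((le_iSup (fun x : X₀ => Filter.limsup
    (fun n : ℕ => (‖((S^[n] x : X₀) : X)‖₊ : ℝ≥0∞) ^ (1 / (n : ℝ))) Filter.atTop) y).trans_lt hs1)
  obtain ⟨C₂, hC₂, hC₂'⟩ := growth (fun n => (T ^ n) (y : X)) t⁻¹ (by positivity) (by
    rw [ENNReal.ofReal_inv_of_pos ht]
    rw [ENNReal.lt_inv_iff_lt_inv]
    exact ht2.trans_le (iInf_le _ y))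
  refine ⟨C₁ + C₂, by positivity, fun n => ?_, fun n => ?_⟩
  · refine (hC₁' n).trans ?_
    gcongr
    linarith
  · refine (hC₂' n).trans ?_
    gcongr
    linarith

lemma final {X : Type*} [NormedAddCommGroup X] [NormedSpace ℂ X]
    [CompleteSpace X] [TopologicalSpace.SeparableSpace X]
    (T : X →L[ℂ] X) (X₀ : Set X) (hX₀ : Dense X₀) (S : X₀ → X₀)
    (hTS : ∀ x : X₀, T ((S x : X₀) : X) = (x : X))
    (R : Set ℝ) (hRne : R.Nonempty) (hRc : R.Countable) (hcpt : IsCompact (closure R))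
    (hsub : closure R ⊆ {r : ℝ | aT X₀ S < ENNReal.ofReal r ∧ ENNReal.ofReal r < bT T X₀}) :
    ∃ x : X, ∀ r ∈ R, ∀ p : ℕ, 1 ≤ p → ∀ l : ℂ, ‖l‖ = r ^ p → x ∈ FHC (l • (T ^ p)) := by
  obtain ⟨ρ₁, h1, h1'⟩ := hcpt.exists_isLeast hRne.closure
  obtain ⟨ρ₂, h2, h2'⟩ := hcpt.exists_isGreatest hRne.closure
  obtain ⟨hρ₁, σ, hσ0, hσ1, hgr⟩ := exists_consts T X₀ S ρ₁ ρ₂ (h1' h2) (hsub h1).1 (hsub h2).2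
  exact main_fhc T X₀ hX₀ S hTS R hRc hRne σ ρ₁ ρ₂ hσ0 hσ1 hρ₁
    (fun r hr => ⟨h1' (subset_closure hr), h2' (subset_closure hr)⟩) hgr

/-- Corollary 2.16. -/
theorem stmt7 {X : Type*} [NormedAddCommGroup X] [NormedSpace ℂ X]
    [CompleteSpace X] [TopologicalSpace.SeparableSpace X]
    (T : X →L[ℂ] X) (X₀ : Set X) (hX₀ : Dense X₀) (S : X₀ → X₀)
    (hTS : ∀ x : X₀, T ((S x : X₀) : X) = (x : X))
    (Λ : Set ℂ) (hne : Λ.Nonempty) :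
    -- First part: moduli countable and relatively compact in (a_T, b_T)
    ((Set.Countable {r : ℝ | ∃ l ∈ Λ, ‖l‖ = r} ∧
      IsCompact (closure {r : ℝ | ∃ l ∈ Λ, ‖l‖ = r}) ∧
      closure {r : ℝ | ∃ l ∈ Λ, ‖l‖ = r} ⊆
        {r : ℝ | aT X₀ S < ENNReal.ofReal r ∧ ENNReal.ofReal r < bT T X₀}) →
      ∃ x : X, ∀ l ∈ Λ, x ∈ FHC (l • T)) ∧
    -- Second part: the set {|λ|^{1/p}} countable and relatively compact in (a_T, b_T)
    ((Set.Countable {r : ℝ | ∃ l ∈ Λ, ∃ p : ℕ, 1 ≤ p ∧ ‖l‖ ^ ((1 : ℝ) / p) = r} ∧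
      IsCompact (closure {r : ℝ | ∃ l ∈ Λ, ∃ p : ℕ, 1 ≤ p ∧ ‖l‖ ^ ((1 : ℝ) / p) = r}) ∧
      closure {r : ℝ | ∃ l ∈ Λ, ∃ p : ℕ, 1 ≤ p ∧ ‖l‖ ^ ((1 : ℝ) / p) = r} ⊆
        {r : ℝ | aT X₀ S < ENNReal.ofReal r ∧ ENNReal.ofReal r < bT T X₀}) →
      ∃ x : X, ∀ l ∈ Λ, ∀ p : ℕ, 1 ≤ p → x ∈ FHC (l • (T ^ p))) := by
  refine ⟨fun ⟨hc, hk, hs⟩ => ?_, fun ⟨hc, hk, hs⟩ => ?_⟩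
  · obtain ⟨l₀, hl₀⟩ := hne
    obtain ⟨x, hx⟩ := final T X₀ hX₀ S hTS
      {r : ℝ | ∃ l ∈ Λ, ‖l‖ = r} (Set.nonempty_of_mem (x := ‖l₀‖) ⟨l₀, hl₀, rfl⟩) hc hk hs
    refine ⟨x, fun l hl => ?_⟩
    have := hx ‖l‖ ⟨l, hl, rfl⟩ 1 le_rfl l (pow_one _).symm
    rwa [pow_one] at this
  · obtain ⟨l₀, hl₀⟩ := hne
    obtain ⟨x, hx⟩ := final T X₀ hX₀ S hTS
      {r : ℝ | ∃ l ∈ Λ, ∃ p : ℕ, 1 ≤ p ∧ ‖l‖ ^ ((1 : ℝ) / p) = r}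
      (Set.nonempty_of_mem (x := ‖l₀‖ ^ ((1 : ℝ) / (1 : ℕ))) ⟨l₀, hl₀, 1, le_rfl, rfl⟩) hc hk hs
    refine ⟨x, fun l hl p hp => ?_⟩
    refine hx _ ⟨l, hl, p, hp, rfl⟩ p hp l ?_
    rw [one_div, Real.rpow_inv_natCast_pow (norm_nonneg l) (by omega)]
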